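/- Let κ be a weakly compact cardinal. A subset A of κ^κ satisfies the Hurewicz dichotomy if and only if it satisfies the Miller-tree Hurewicz dichotomy. -/

import Mathlib

open Cardinal Set Topology

universe u

/-- The bounded topology on `K → Y`: basic open sets are determined by an
initial segment of values. -/
def bTop (K : Type u) [LinearOrder K] (Y : Type u) : TopologicalSpace (K → Y) :=
  TopologicalSpace.generateFrom
    {U | ∃ (b : K) (s : K → Y), U = {x | ∀ i, i < b → x i = s i}}

/-- `A` is κ-compact: every open cover (for the bounded topology) has a
subcover of size `< #K`. -/
def KCompact (K : Type u) [LinearOrder K] {Y : Type u} (A : Set (K → Y)) : Prop :=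
  ∀ 𝒰 : Set (Set (K → Y)), (∀ U ∈ 𝒰, IsOpen[bTop K Y] U) → A ⊆ ⋃₀ 𝒰 →
    ∃ 𝒱 ⊆ 𝒰, #𝒱 < #K ∧ A ⊆ ⋃₀ 𝒱

/-- `B` is a `K_κ` subset: a union of κ-many κ-compact sets. -/
def IsKK (K : Type u) [LinearOrder K] (B : Set (K → K)) : Prop :=
  ∃ C : K → Set (K → K), (∀ b, KCompact K (C b)) ∧ B = ⋃ b, C b

/-- Nodes of the tree `Y^{<K}`: sequences of length `b`, for `b : K`. -/
abbrev Nd (K : Type u) [LinearOrder K] (Y : Type u) := Σ b : K, (Set.Iio b → Y)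

/-- Restriction of a node to a smaller length. -/
def ndRes (K : Type u) [LinearOrder K] {Y : Type u} (p : Nd K Y) (c : K) (h : c ≤ p.1) :
    Nd K Y :=
  ⟨c, fun i => p.2 ⟨i.1, lt_of_lt_of_le i.2 h⟩⟩

/-- Restriction of a branch `x : K → Y` to length `b`. -/
def xRes (K : Type u) [LinearOrder K] {Y : Type u} (x : K → Y) (b : K) : Nd K Y :=
  ⟨b, fun i => x i.1⟩

/-- `q` extends `p` as a sequence. -/
def NdExt (K : Type u) [LinearOrder K] {Y : Type u} (q p : Nd K Y) : Prop :=
  ∃ h : p.1 ≤ q.1, ∀ i : Set.Iio p.1, q.2 ⟨i.1, lt_of_lt_of_le i.2 h⟩ = p.2 i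

/-- A subtree of `Y^{<K}`: a set of nodes closed under restriction. -/
def IsSubtree (K : Type u) [LinearOrder K] {Y : Type u} (T : Set (Nd K Y)) : Prop :=
  ∀ p ∈ T, ∀ c, ∀ h : c ≤ p.1, ndRes K p c h ∈ T

/-- The body `[T]`: the set of `K`-branches through `T`. -/
def body (K : Type u) [LinearOrder K] {Y : Type u} (T : Set (Nd K Y)) : Set (K → Y) :=
  {x | ∀ b : K, xRes K x b ∈ T}

/-- `T` is pruned: every node is extended by a branch. -/
def Pruned (K : Type u) [LinearOrder K] {Y : Type u} (T : Set (Nd K Y)) : Prop :=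
  ∀ p ∈ T, ∃ x ∈ body K T, NdExt K (xRes K x p.1) p

/-- `b` is a limit element: not least, and with no immediate predecessor. -/
def IsLimElt (K : Type u) [LinearOrder K] (b : K) : Prop :=
  (∃ c, c < b) ∧ ∀ c, c < b → ∃ d, c < d ∧ d < b

/-- Superclosed: closed under unions of increasing sequences of length `< K`. -/
def Superclosed (K : Type u) [LinearOrder K] {Y : Type u} (T : Set (Nd K Y)) : Prop :=
  ∀ p : Nd K Y, IsLimElt K p.1 → (∀ c, ∀ h : c < p.1, ndRes K p c h.le ∈ T) → p ∈ T

/-- The values at position `p.1` realized by extensions of `p` in `T`, i.e. the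
immediate successors of `p` in `T`. -/
def splitVals (K : Type u) [LinearOrder K] {Y : Type u} (T : Set (Nd K Y)) (p : Nd K Y) :
    Set Y :=
  {a | ∃ q ∈ T, ∃ h : p.1 < q.1,
    (∀ i : Set.Iio p.1, q.2 ⟨i.1, i.2.trans h⟩ = p.2 i) ∧ q.2 ⟨p.1, h⟩ = a}

/-- A perfect tree: a nonempty superclosed subtree in which every node is
extended by a 2-splitting node. -/
def PerfectTree (K : Type u) [LinearOrder K] (T : Set (Nd K K)) : Prop :=
  T.Nonempty ∧ IsSubtree K T ∧ Superclosed K T ∧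
    ∀ p ∈ T, ∃ q ∈ T, NdExt K q p ∧
      ∃ a ∈ splitVals K T q, ∃ a' ∈ splitVals K T q, a ≠ a'

/-- A κ-Miller tree: a nonempty superclosed subtree in which every node is
extended by a κ-splitting node. -/
def MillerTree (K : Type u) [LinearOrder K] (T : Set (Nd K K)) : Prop :=
  T.Nonempty ∧ IsSubtree K T ∧ Superclosed K T ∧
    ∀ p ∈ T, ∃ q ∈ T, NdExt K q p ∧ #K ≤ #(splitVals K T q)

/-- A κ-tree: a subtree of height `K` all of whose levels have size `< #K`. -/
def KTree (K : Type u) [LinearOrder K] {Y : Type u} (T : Set (Nd K Y)) : Prop :=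
  (∀ b : K, ∃ t : Set.Iio b → Y, (⟨b, t⟩ : Nd K Y) ∈ T) ∧
    ∀ b : K, #{t : Set.Iio b → Y | (⟨b, t⟩ : Nd K Y) ∈ T} < #K

/-- A κ-Aronszajn tree: a κ-tree with no branch. -/
def Aronszajn (K : Type u) [LinearOrder K] (S : Set (Nd K K)) : Prop :=
  IsSubtree K S ∧ KTree K S ∧ body K S = ∅

/-- The tree property for `K`: every κ-tree has a branch. -/
def TreeProp (K : Type u) [LinearOrder K] : Prop :=
  ∀ T : Set (Nd K K), IsSubtree K T → KTree K T → (body K T).Nonempty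

/-- weak compactness: inaccessibility together with the tree property. -/
def WComp (K : Type u) [LinearOrder K] : Prop :=
  (#K).IsInaccessible ∧ TreeProp K

/-- `C` is homeomorphic to the generalized Baire space `K → K`. -/
def HomeoToBaire (K : Type u) [LinearOrder K] (C : Set (K → K)) : Prop :=
  letI := bTop K K
  Nonempty (↥C ≃ₜ (K → K))

/-- `C` is homeomorphic to the generalized Cantor space `K → ULift.{u} Bool`. -/
def HomeoToCantor (K : Type u) [LinearOrder K] (C : Set (K → K)) : Prop :=
  letI := bTop K K
  letI : TopologicalSpace (K → ULift.{u} Bool) := bTop K (ULift.{u} Bool)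
  Nonempty (↥C ≃ₜ (K → ULift.{u} Bool))

/-- The Hurewicz dichotomy for `A`. -/
def HD (K : Type u) [LinearOrder K] (A : Set (K → K)) : Prop :=
  (∃ B, IsKK K B ∧ A ⊆ B) ∨
    ∃ C ⊆ A, IsClosed[bTop K K] C ∧ HomeoToBaire K C

/-- The Miller-tree Hurewicz dichotomy for `A`. -/
def MillerHD (K : Type u) [LinearOrder K] (A : Set (K → K)) : Prop :=
  (∃ B, IsKK K B ∧ A ⊆ B) ∨ ∃ T, MillerTree K T ∧ body K T ⊆ A

/-- Σ¹₁ subsets of `K → K`: projections of closed subsets of the product. -/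
def Sigma11 (K : Type u) [LinearOrder K] (A : Set (K → K)) : Prop :=
  letI := bTop K K
  ∃ C : Set ((K → K) × (K → K)), IsClosed C ∧ A = Prod.fst '' C

/-- The κ-perfect set property. -/
def PSP (K : Type u) [LinearOrder K] (A : Set (K → K)) : Prop :=
  #A ≤ #K ∨ ∃ C ⊆ A, IsClosed[bTop K K] C ∧ HomeoToCantor K C

/-- `A ⊆ K → K` is bounded. -/
def BddSet (K : Type u) [LinearOrder K] (A : Set (K → K)) : Prop :=
  ∃ x : K → K, ∀ y ∈ A, ∀ i, y i ≤ x i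

/-- `A ⊆ K → K` is eventually bounded. -/
def EvBddSet (K : Type u) [LinearOrder K] (A : Set (K → K)) : Prop :=
  ∃ x : K → K, ∀ y ∈ A, ∃ b : K, ∀ i, b ≤ i → y i ≤ x i

/-- Nodes of the product tree `K^{<K} × K^{<K}` (pairs of equal length). -/
abbrev PNd (K : Type u) [LinearOrder K] := Σ b : K, (Set.Iio b → K) × (Set.Iio b → K)

/-- Subtree of the product tree: closed under simultaneous restriction. -/
def IsPSubtree (K : Type u) [LinearOrder K] (T : Set (PNd K)) : Prop :=
  ∀ p ∈ T, ∀ c, ∀ h : c ≤ p.1,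
    (⟨c, fun i => p.2.1 ⟨i.1, lt_of_lt_of_le i.2 h⟩,
        fun i => p.2.2 ⟨i.1, lt_of_lt_of_le i.2 h⟩⟩ : PNd K) ∈ T

/-- The projection `p[T]` of the set of branches of a product tree to the first
coordinate. -/
def pProj (K : Type u) [LinearOrder K] (T : Set (PNd K)) : Set (K → K) :=
  {x | ∃ y : K → K, ∀ b : K,
    (⟨b, fun i => x i.1, fun i => y i.1⟩ : PNd K) ∈ T}

/-- An `∃^x`-perfect embedding into a product tree `T`. -/
def PerfEmb (K : Type u) [LinearOrder K] (T : Set (PNd K)) (e : Nd K (ULift.{u} Bool) → PNd K) : Prop :=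
  (∀ u, e u ∈ T) ∧
  (∀ u u' : Nd K (ULift.{u} Bool), ∀ h : u.1 < u'.1,
     (∀ i : Set.Iio u.1, u'.2 ⟨i.1, i.2.trans h⟩ = u.2 i) →
     ∃ h' : (e u).1 < (e u').1,
       (∀ i : Set.Iio (e u).1, (e u').2.1 ⟨i.1, i.2.trans h'⟩ = (e u).2.1 i) ∧
       (∀ i : Set.Iio (e u).1, (e u').2.2 ⟨i.1, i.2.trans h'⟩ = (e u).2.2 i)) ∧
  (∀ u u' : Nd K (ULift.{u} Bool), ¬ NdExt K u u' → ¬ NdExt K u' u →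
     ¬ NdExt K ⟨(e u).1, (e u).2.1⟩ ⟨(e u').1, (e u').2.1⟩ ∧
     ¬ NdExt K ⟨(e u').1, (e u').2.1⟩ ⟨(e u).1, (e u).2.1⟩) ∧
  (∀ u : Nd K (ULift.{u} Bool), IsLimElt K u.1 → ∀ d, d < (e u).1 →
     ∃ c, ∃ h : c < u.1, d < (e (ndRes K u c h.le)).1)

/-- The immediate extension `u⌢⟨a⟩` of a node `u` by a value `a`. -/
def extNd (K : Type u) [LinearOrder K] [SuccOrder K] (u : Nd K K) (a : K) : Nd K K :=
  ⟨Order.succ u.1, fun i => if h : i.1 < u.1 then u.2 ⟨i.1, h⟩ else a⟩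

/-- An `∃^x`-superperfect embedding into a product tree `T`. -/
def SuperPerfEmb (K : Type u) [LinearOrder K] [SuccOrder K] (T : Set (PNd K))
    (e : Nd K K → PNd K) : Prop :=
  (∀ u, e u ∈ T) ∧
  (∀ u u' : Nd K K, ∀ h : u.1 < u'.1,
     (∀ i : Set.Iio u.1, u'.2 ⟨i.1, i.2.trans h⟩ = u.2 i) →
     ∃ h' : (e u).1 < (e u').1,
       (∀ i : Set.Iio (e u).1, (e u').2.1 ⟨i.1, i.2.trans h'⟩ = (e u).2.1 i) ∧
       (∀ i : Set.Iio (e u).1, (e u').2.2 ⟨i.1, i.2.trans h'⟩ = (e u).2.2 i)) ∧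
  (∀ u : Nd K K, IsLimElt K u.1 → ∀ d, d < (e u).1 →
     ∃ c, ∃ h : c < u.1, d < (e (ndRes K u c h.le)).1) ∧
  (∀ u : Nd K K, ∃ γ : K, (e u).1 ≤ γ ∧
     ∃ hlen : ∀ a : K, γ < (e (extNd K u a)).1,
       ∀ a b : K, a ≠ b →
         (∀ i : Set.Iio γ,
           (e (extNd K u a)).2.1 ⟨i.1, i.2.trans (hlen a)⟩ =
           (e (extNd K u b)).2.1 ⟨i.1, i.2.trans (hlen b)⟩) ∧
         (e (extNd K u a)).2.1 ⟨γ, hlen a⟩ ≠ (e (extNd K u b)).2.1 ⟨γ, hlen b⟩)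

/-!
The second alternatives of both dichotomies amount to a splitting map with range in `A`: a map `Φ`
on `κ^κ` turning a first difference of `f` and `g` at `b` into a first difference of `Φ f` and
`Φ g` at a level determined by `f` and `b`. The range of a splitting map is closed, homeomorphic to
`κ^κ`, and the body of a Miller tree.

Conversely, a Miller tree yields a splitting map into its body by fusion along its κ-splitting
nodes. For a closed embedding `h` of `κ^κ`, the fusion runs through the full tree instead; for it
one needs, above every node `s` of length `l`, κ-many branches whose images under `h` first differ
at one common level. Choose branches through `s` with pairwise different values at `l`. If no node
of the tree of initial segments of their images were κ-splitting, this tree would have small levels,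
as κ is inaccessible, and the tree property would give a point with κ-many of the images in each of
its neighbourhoods. That point is `h y` for some `y`, as the range is closed, and κ-many of the
branches would have the value `y l` at `l`.
-/

section Nodes

variable {K : Type u} [LinearOrder K] {Y : Type u} {x y : K → Y} {b c : K} {p q r : Nd K Y}

theorem eqOn_Iio_update {Z : Type*} (x : K → Z) (b : K) (a : Z) :
    EqOn x (Function.update x b a) (Iio b) :=
  fun _ hi => (Function.update_of_ne (ne_of_lt hi) _ _).symm

theorem xRes_eq_iff : xRes K x p.1 = p ↔ ∀ i : Iio p.1, x i = p.2 i := by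
  obtain ⟨b, p⟩ := p
  simp [xRes, funext_iff]

theorem xRes_eq_xRes_iff : xRes K x b = xRes K y b ↔ EqOn x y (Iio b) := by
  simp [xRes, funext_iff, EqOn]

theorem xRes_eq_ndRes (hx : xRes K x p.1 = p) (hc : c ≤ p.1) : xRes K x c = ndRes K p c hc :=
  xRes_eq_iff (p := ndRes K p c hc).2 fun i => xRes_eq_iff.1 hx ⟨i, i.2.trans_le hc⟩

theorem NdExt.trans (hqr : NdExt K q r) (hrp : NdExt K r p) : NdExt K q p :=
  ⟨hrp.1.trans hqr.1, fun i => (hqr.2 ⟨i, i.2.trans_le hrp.1⟩).trans (hrp.2 i)⟩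

theorem ndExt_xRes_iff : NdExt K (xRes K x b) p ↔ p.1 ≤ b ∧ xRes K x p.1 = p :=
  ⟨fun ⟨h, hp⟩ => ⟨h, xRes_eq_iff.2 hp⟩, fun ⟨h, hp⟩ => ⟨h, xRes_eq_iff.1 hp⟩⟩

theorem IsSubtree.xRes_mem {T : Set (Nd K Y)} (hT : IsSubtree K T) (hb : xRes K x b ∈ T)
    (hcb : c ≤ b) : xRes K x c ∈ T :=
  hT _ hb c hcb

theorem exists_forall_xRes_eq [Nonempty Y] {ι : Type*} [LinearOrder ι] {u : ι → Nd K Y}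
    (hu : ∀ c d, c < d → NdExt K (u d) (u c)) : ∃ x, ∀ c, xRes K x (u c).1 = u c := by
  have coherent : ∀ c d i (hc : i < (u c).1) (hd : i < (u d).1),
      (u c).2 ⟨i, hc⟩ = (u d).2 ⟨i, hd⟩ := by
    intro c d i hc hd
    rcases lt_trichotomy c d with hcd | rfl | hdc
    · exact ((hu c d hcd).2 ⟨i, hc⟩).symm
    · rfl
    · exact (hu d c hdc).2 ⟨i, hd⟩
  have common_value : ∀ i, ∃ a, ∀ c (hc : i < (u c).1), (u c).2 ⟨i, hc⟩ = a := by
    intro i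
    by_cases h : ∃ c, i < (u c).1
    · obtain ⟨d, hd⟩ := h
      exact ⟨_, fun c hc => coherent c d i hc hd⟩
    · exact ⟨Classical.arbitrary Y, fun c hc => absurd ⟨c, hc⟩ h⟩
  choose x hx using common_value
  exact ⟨x, fun c => xRes_eq_iff.2 fun i => (hx i c i.2).symm⟩

theorem exists_xRes_eq [Nonempty Y] (p : Nd K Y) : ∃ x, xRes K x p.1 = p := by
  obtain ⟨x, hx⟩ := exists_forall_xRes_eq (u := fun _ : Unit => p) (fun _ _ h => absurd h (by simp))
  exact ⟨x, hx ()⟩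

theorem Superclosed.exists_ndExt_of_chain [WellFoundedLT K] [Nonempty Y] {T : Set (Nd K Y)}
    (hsc : Superclosed K T) (hT : IsSubtree K T) (hne : T.Nonempty) {ι : Type*} [LinearOrder ι]
    {u : ι → Nd K Y} (huT : ∀ c, u c ∈ T) (hu : ∀ c d, c < d → NdExt K (u d) (u c))
    (hbdd : BddAbove (range fun c => (u c).1)) : ∃ p ∈ T, ∀ c, NdExt K p (u c) := by
  rcases isEmpty_or_nonempty ι with hι | ⟨⟨c₀⟩⟩
  · exact hne.imp fun p hp => ⟨hp, isEmptyElim⟩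
  obtain ⟨x, hx⟩ := exists_forall_xRes_eq hu
  obtain ⟨m, hm, hmin⟩ := wellFounded_lt.has_min _ hbdd
  have hlub : IsLUB (range fun c => (u c).1) m := ⟨hm, fun k hk => not_lt.1 (hmin k hk)⟩
  have hle : ∀ c, (u c).1 ≤ m := fun c => hm ⟨c, rfl⟩
  have hxT : ∀ k < m, ∃ c, k < (u c).1 ∧ xRes K x k ∈ T := by
    intro k hk
    obtain ⟨_, ⟨c, rfl⟩, hkc⟩ := (lt_isLUB_iff hlub).1 hk
    exact ⟨c, hkc, hT.xRes_mem (by rw [hx]; exact huT c) hkc.le⟩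
  refine ⟨xRes K x m, ?_, fun c => ndExt_xRes_iff.2 ⟨hle c, hx c⟩⟩
  by_cases hattained : ∃ c, (u c).1 = m
  · obtain ⟨c, rfl⟩ := hattained
    exact (hx c).symm ▸ huT c
  · have hlt : ∀ c, (u c).1 < m := fun c => (hle c).lt_of_ne fun h => hattained ⟨c, h⟩
    refine hsc _ ⟨⟨_, hlt c₀⟩, fun k hk => ?_⟩ fun k hk => (hxT k hk).choose_spec.2
    obtain ⟨c, hkc, -⟩ := hxT k hk
    exact ⟨_, hkc, hlt c⟩

theorem exists_mem_body_of_chain [Nonempty Y] {T : Set (Nd K Y)} (hT : IsSubtree K T)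
    {u : K → Nd K Y} (huT : ∀ c, u c ∈ T) (hu : ∀ c d, c < d → NdExt K (u d) (u c))
    (hlen : ∀ c, c ≤ (u c).1) : ∃ x ∈ body K T, ∀ c, xRes K x (u c).1 = u c := by
  obtain ⟨x, hx⟩ := exists_forall_xRes_eq hu
  exact ⟨x, fun b => hT.xRes_mem ((hx b).symm ▸ huT b) (hlen b), hx⟩

/-- The tree of initial segments of elements of `C`. -/
def treeOf (C : Set (K → Y)) : Set (Nd K Y) := {p | ∃ x ∈ C, ∃ b, xRes K x b = p}

theorem xRes_mem_treeOf {C : Set (K → Y)} :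
    xRes K x b ∈ treeOf C ↔ ∃ y ∈ C, EqOn x y (Iio b) := by
  constructor
  · rintro ⟨y, hy, c, hyx⟩
    obtain rfl : c = b := congrArg Sigma.fst hyx
    exact ⟨y, hy, xRes_eq_xRes_iff.1 hyx.symm⟩
  · rintro ⟨y, hy, hxy⟩
    exact ⟨y, hy, b, xRes_eq_xRes_iff.2 hxy.symm⟩

theorem isSubtree_treeOf (C : Set (K → Y)) : IsSubtree K (treeOf C) := by
  rintro _ ⟨x, hx, b, rfl⟩ c _
  exact ⟨x, hx, c, rfl⟩

theorem treeOf_nonempty [Nonempty K] {C : Set (K → Y)} (hC : C.Nonempty) : (treeOf C).Nonempty :=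
  ‹Nonempty K›.elim fun b => hC.imp' (xRes K · b) fun x hx => ⟨x, hx, b, rfl⟩

theorem mem_splitVals_treeOf [NoMaxOrder K] {C : Set (K → Y)} {a : Y} :
    a ∈ splitVals K (treeOf C) (xRes K x b) ↔ ∃ y ∈ C, EqOn x y (Iio b) ∧ y b = a := by
  constructor
  · rintro ⟨_, ⟨y, hy, c, rfl⟩, h, hxy, rfl⟩
    exact ⟨y, hy, fun i hi => (hxy ⟨i, hi⟩).symm, rfl⟩
  · rintro ⟨y, hy, hxy, rfl⟩
    obtain ⟨c, hc⟩ := exists_gt b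
    exact ⟨xRes K y c, ⟨y, hy, c, rfl⟩, hc, fun i => (hxy i.2).symm, rfl⟩

end Nodes

attribute [local instance] bTop

section BoundedTopology

variable {K : Type u} [LinearOrder K] {Y Z : Type u}

theorem HomeoToBaire.exists_isClosedEmbedding {C : Set (K → K)} (hC : IsClosed C)
    (hCK : HomeoToBaire K C) : ∃ h : (K → K) → K → K, IsClosedEmbedding h ∧ range h = C := by
  obtain ⟨e⟩ := hCK
  refine ⟨Subtype.val ∘ e.symm, hC.isClosedEmbedding_subtypeVal.comp e.symm.isClosedEmbedding, ?_⟩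
  rw [e.symm.surjective.range_comp, Subtype.range_val]

variable [Nonempty K]

theorem nhds_bTop_hasBasis (x : K → Y) :
    (𝓝 x).HasBasis (fun _ : K => True) fun b => {y | EqOn x y (Iio b)} := by
  have hbasis : TopologicalSpace.IsTopologicalBasis
      {U : Set (K → Y) | ∃ (b : K) (s : K → Y), U = {x | ∀ i, i < b → x i = s i}} := by
    refine ⟨?_, ?_, rfl⟩
    · rintro _ ⟨b, s, rfl⟩ _ ⟨c, t, rfl⟩ z ⟨hs, ht⟩
      refine ⟨_, ⟨max b c, z, rfl⟩, fun i _ => rfl, fun y hy => ⟨fun i hi => ?_, fun i hi => ?_⟩⟩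
      · exact (hy i (lt_max_of_lt_left hi)).trans (hs i hi)
      · exact (hy i (lt_max_of_lt_right hi)).trans (ht i hi)
    · exact eq_univ_of_forall fun z => ⟨_, ⟨Classical.arbitrary K, z, rfl⟩, fun i _ => rfl⟩
  refine hbasis.nhds_hasBasis.to_hasBasis ?_ fun b _ => ?_
  · rintro _ ⟨⟨b, s, rfl⟩, hx⟩
    exact ⟨b, trivial, fun y hy i hi => (hy hi).symm.trans (hx i hi)⟩
  · exact ⟨_, ⟨⟨b, x, rfl⟩, fun i _ => rfl⟩, fun y hy i hi => (hy i hi).symm⟩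

theorem isClosed_bTop_iff {C : Set (K → Y)} :
    IsClosed C ↔ ∀ x, (∀ b, ∃ y ∈ C, EqOn x y (Iio b)) → x ∈ C := by
  simp only [← closure_subset_iff_isClosed, subset_def,
    mem_closure_iff_nhds_basis (nhds_bTop_hasBasis _), forall_const, mem_ofPred_eq]

theorem continuous_bTop_iff {h : (K → Z) → K → Y} :
    Continuous h ↔ ∀ x b, ∃ c, ∀ y, EqOn x y (Iio c) → EqOn (h x) (h y) (Iio b) := by
  simp only [continuous_iff_continuousAt, ContinuousAt,
    (nhds_bTop_hasBasis _).tendsto_iff (nhds_bTop_hasBasis _), true_and, forall_const,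
    mem_ofPred_eq]

theorem exists_eqOn_of_isInducing {h : (K → Z) → K → Y} (hh : IsInducing h) (x : K → Z)
    (b : K) : ∃ c, ∀ y, EqOn (h x) (h y) (Iio c) → EqOn x y (Iio b) := by
  have hmem := (nhds_bTop_hasBasis x).mem_of_mem (i := b) trivial
  rw [hh.nhds_eq_comap] at hmem
  simpa using ((nhds_bTop_hasBasis (h x)).comap h).mem_iff.1 hmem

theorem body_treeOf {C : Set (K → Y)} (hC : IsClosed C) : body K (treeOf C) = C := by
  ext x
  simp only [body, mem_ofPred_eq, xRes_mem_treeOf]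
  exact ⟨isClosed_bTop_iff.1 hC x, fun hx b => ⟨x, hx, eqOn_refl _ _⟩⟩

end BoundedTopology

section Splitting

variable {K : Type u} [LinearOrder K]

/-- A splitting map sends branches of `Z^{<K}` to branches of `Y^{<K}` so that two branches first
separated at position `b` have images first separated at a level depending only on one of them and
on `b`. Such maps stand for superperfect embeddings of `Z^{<K}` into `Y^{<K}`, seen on branches. -/
def IsSplittingMap {Y Z : Type*} (Φ : (K → Z) → K → Y) : Prop :=
  ∀ f b, ∃ γ, ∀ g, EqOn f g (Iio b) →
    EqOn (Φ f) (Φ g) (Iio γ) ∧ (Φ f γ = Φ g γ ↔ f b = g b)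

namespace IsSplittingMap

section Level

variable {Y Z : Type*} {Φ : (K → Z) → K → Y} {f g : K → Z} {b : K}

/-- The level at which the images of `f` and of branches separated from `f` at `b` separate. -/
noncomputable def level (hΦ : IsSplittingMap Φ) (f : K → Z) (b : K) : K :=
  (hΦ f b).choose

theorem eqOn_Iio_level (hΦ : IsSplittingMap Φ) (hfg : EqOn f g (Iio b)) :
    EqOn (Φ f) (Φ g) (Iio (hΦ.level f b)) :=
  ((hΦ f b).choose_spec g hfg).1

theorem apply_level_eq_iff (hΦ : IsSplittingMap Φ) (hfg : EqOn f g (Iio b)) :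
    Φ f (hΦ.level f b) = Φ g (hΦ.level f b) ↔ f b = g b :=
  ((hΦ f b).choose_spec g hfg).2

theorem eqOn_Iic_level (hΦ : IsSplittingMap Φ) (hfg : EqOn f g (Iic b)) :
    EqOn (Φ f) (Φ g) (Iic (hΦ.level f b)) := by
  have hlt := hfg.mono Iio_subset_Iic_self
  rw [← Iio_union_right, eqOn_union, eqOn_singleton]
  exact ⟨hΦ.eqOn_Iio_level hlt, (hΦ.apply_level_eq_iff hlt).2 (hfg self_mem_Iic)⟩

theorem level_le_level (hΦ : IsSplittingMap Φ) (hfg : EqOn f g (Iio b)) (hne : f b ≠ g b) :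
    hΦ.level g b ≤ hΦ.level f b := by
  by_contra! hlt
  exact hne ((hΦ.apply_level_eq_iff hfg).1 (hΦ.eqOn_Iio_level hfg.symm hlt).symm)

theorem level_eq_level (hΦ : IsSplittingMap Φ) (hfg : EqOn f g (Iio b)) (hne : f b ≠ g b) :
    hΦ.level f b = hΦ.level g b :=
  (hΦ.level_le_level hfg.symm hne.symm).antisymm (hΦ.level_le_level hfg hne)

theorem eq_of_apply_level_eq {g' : K → Z} (hΦ : IsSplittingMap Φ) (hg : EqOn f g (Iio b))
    (hg' : EqOn f g' (Iio b)) (h : Φ g (hΦ.level f b) = Φ g' (hΦ.level f b)) : g b = g' b := by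
  by_cases hne : f b = g b
  · rw [← (hΦ.apply_level_eq_iff hg).2 hne, hΦ.apply_level_eq_iff hg'] at h
    exact hne.symm.trans h
  · rwa [hΦ.level_eq_level hg hne, hΦ.apply_level_eq_iff (hg.symm.trans hg')] at h

variable [Nontrivial Z]

theorem level_strictMono (hΦ : IsSplittingMap Φ) (f : K → Z) : StrictMono (hΦ.level f) := by
  intro c b hcb
  by_contra! hle
  obtain ⟨a, ha⟩ := exists_ne (f b)
  have hfg := eqOn_Iio_update f b a
  have hagree := hΦ.eqOn_Iic_level (hfg.mono (Iic_subset_Iio.2 hcb)) hle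
  rw [hΦ.apply_level_eq_iff hfg, Function.update_self] at hagree
  exact ha hagree.symm

variable [WellFoundedLT K]

theorem le_level (hΦ : IsSplittingMap Φ) (f : K → Z) (b : K) : b ≤ hΦ.level f b :=
  (hΦ.level_strictMono f).le_apply

theorem eqOn_Iic_of_eqOn_level (hΦ : IsSplittingMap Φ)
    (h : EqOn (Φ f) (Φ g) (Iic (hΦ.level f b))) : EqOn f g (Iic b) := by
  induction b using WellFoundedLT.induction with
  | ind b ih =>
    have hlt : EqOn f g (Iio b) := fun i hi =>
      ih i hi (h.mono (Iic_subset_Iic.2 (hΦ.level_strictMono f hi).le)) self_mem_Iic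
    rw [← Iio_union_right, eqOn_union, eqOn_singleton]
    exact ⟨hlt, (hΦ.apply_level_eq_iff hlt).1 (h self_mem_Iic)⟩

theorem injective (hΦ : IsSplittingMap Φ) : Function.Injective Φ := fun _ _ hfg =>
  funext fun b => hΦ.eqOn_Iic_of_eqOn_level (b := b) (hfg ▸ eqOn_refl _ _) self_mem_Iic

-- If `Φ g` agrees with `x` past the level `hΦ.level g d`, then `x` determines `g d`; reading off
-- these coordinates from all such `g` at once gives `f`.
theorem exists_eqOn_of_eqOn (hΦ : IsSplittingMap Φ) (x : K → Y) :
    ∃ f, ∀ g c, EqOn x (Φ g) (Iio c) → EqOn x (Φ f) (Iio c) := by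
  have apply_eq : ∀ {g g' c c' d}, c ≤ c' → EqOn x (Φ g) (Iio c) → EqOn x (Φ g') (Iio c') →
      hΦ.level g d < c → g d = g' d := by
    intro g g' c c' d hcc hg hg' hd
    have hgg : EqOn (Φ g) (Φ g') (Iio c) := hg.symm.trans (hg'.mono (Iio_subset_Iio hcc))
    exact hΦ.eqOn_Iic_of_eqOn_level (hgg.mono (Iic_subset_Iio.2 hd)) self_mem_Iic
  have common_value : ∀ d, ∃ a, ∀ g c, EqOn x (Φ g) (Iio c) → hΦ.level g d < c → g d = a := by
    intro d
    by_cases h : ∃ g c, EqOn x (Φ g) (Iio c) ∧ hΦ.level g d < c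
    · obtain ⟨g', c', hg', hd'⟩ := h
      refine ⟨g' d, fun g c hg hd => ?_⟩
      rcases le_total c c' with hcc | hcc
      · exact apply_eq hcc hg hg' hd
      · exact (apply_eq hcc hg' hg hd').symm
    · exact ⟨Classical.arbitrary Z, fun g c hg hd => absurd ⟨g, c, hg, hd⟩ h⟩
  choose f hf using common_value
  refine ⟨f, fun g c hg => ?_⟩
  obtain ⟨d, hd, hmin⟩ := wellFounded_lt.has_min {d | c ≤ hΦ.level g d} ⟨c, hΦ.le_level g c⟩
  have hgf : EqOn g f (Iio d) := fun e he => hf e g c hg (not_le.1 fun h => hmin e h he)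
  exact hg.trans ((hΦ.eqOn_Iio_level hgf).mono (Iio_subset_Iio hd))

end Level

section Range

variable {Y Z : Type u} {Φ : (K → Z) → K → Y}

theorem mk_le_mk_splitVals [NoMaxOrder K] (hΦ : IsSplittingMap Φ) (f : K → Z)
    (b : K) :
    #Z ≤ #(splitVals K (treeOf (range Φ)) (xRes K (Φ f) (hΦ.level f b))) := by
  have mem_splitVals : ∀ a, Φ (Function.update f b a) (hΦ.level f b) ∈
      splitVals K (treeOf (range Φ)) (xRes K (Φ f) (hΦ.level f b)) := fun a =>
    mem_splitVals_treeOf.2 ⟨_, ⟨_, rfl⟩, hΦ.eqOn_Iio_level (eqOn_Iio_update f b a), rfl⟩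
  refine mk_le_of_injective (f := fun a => ⟨_, mem_splitVals a⟩) fun a a' haa => ?_
  simpa using hΦ.eq_of_apply_level_eq (eqOn_Iio_update f b a) (eqOn_Iio_update f b a')
    (Subtype.ext_iff.1 haa)

variable [WellFoundedLT K] [Nontrivial Z]

theorem superclosed_treeOf_range (hΦ : IsSplittingMap Φ) : Superclosed K (treeOf (range Φ)) := by
  intro p hp hpT
  have : Nonempty Y := ⟨Φ (fun _ => Classical.arbitrary Z) p.1⟩
  obtain ⟨x, hx⟩ := exists_xRes_eq p
  obtain ⟨f, hf⟩ := hΦ.exists_eqOn_of_eqOn x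
  rw [← hx, xRes_mem_treeOf]
  refine ⟨Φ f, ⟨f, rfl⟩, fun i hi => ?_⟩
  obtain ⟨c, hic, hcp⟩ := hp.2 i hi
  obtain ⟨_, ⟨g, rfl⟩, hg⟩ := xRes_mem_treeOf.1 (xRes_eq_ndRes hx hcp.le ▸ hpT c hcp)
  exact hf g c hg hic

variable [Nonempty K]

theorem isInducing (hΦ : IsSplittingMap Φ) : IsInducing Φ := by
  refine isInducing_iff_nhds.2 fun f => ?_
  refine (nhds_bTop_hasBasis f).ext ((nhds_bTop_hasBasis (Φ f)).comap Φ) ?_ ?_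
  · exact fun b _ => ⟨hΦ.level f b, trivial, fun g hg i hi => hΦ.eqOn_Iic_of_eqOn_level
      (hg.mono (Iic_subset_Iio.2 (hΦ.level_strictMono f hi))) self_mem_Iic⟩
  · exact fun b _ => ⟨b, trivial, fun g hg =>
      (hΦ.eqOn_Iio_level hg).mono (Iio_subset_Iio (hΦ.le_level f b))⟩

variable [NoMaxOrder K]

theorem isClosed_range (hΦ : IsSplittingMap Φ) : IsClosed (range Φ) := by
  refine isClosed_bTop_iff.2 fun x hx => ?_
  obtain ⟨f, hf⟩ := hΦ.exists_eqOn_of_eqOn x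
  refine ⟨f, funext fun i => ?_⟩
  obtain ⟨c, hic⟩ := exists_gt i
  obtain ⟨_, ⟨g, rfl⟩, hg⟩ := hx c
  exact (hf g c hg hic).symm

theorem homeoToBaire_range {Φ : (K → K) → K → K} (hΦ : IsSplittingMap Φ) :
    HomeoToBaire K (range Φ) :=
  ⟨(IsEmbedding.mk hΦ.isInducing hΦ.injective).toHomeomorph.symm⟩

theorem millerTree_treeOf_range {Φ : (K → K) → K → K} (hΦ : IsSplittingMap Φ) :
    MillerTree K (treeOf (range Φ)) := by
  refine ⟨treeOf_nonempty (range_nonempty Φ), isSubtree_treeOf _,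
    hΦ.superclosed_treeOf_range, ?_⟩
  rintro _ ⟨_, ⟨f, rfl⟩, b, rfl⟩
  exact ⟨xRes K (Φ f) (hΦ.level f b), ⟨_, ⟨f, rfl⟩, _, rfl⟩,
    ndExt_xRes_iff.2 ⟨hΦ.le_level f b, rfl⟩, hΦ.mk_le_mk_splitVals f b⟩

end Range

end IsSplittingMap

end Splitting

section Fusion

variable {K : Type u} [LinearOrder K]

/-- `h` splits `T` under `p` into `Z`: there are proper extensions `t a ∈ T` of `p`, one for each
`a : Z`, such that the `h`-images of all branches of `T` through them first differ at one common
level `γ`, where the value identifies `a`. -/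
def SplitsUnder {W Y : Type u} (h : (K → W) → K → Y) (T : Set (Nd K W)) (Z : Type*)
    (p : Nd K W) : Prop :=
  ∃ (γ : K) (t : Z → Nd K W), (∀ a, t a ∈ T ∧ NdExt K (t a) p ∧ p.1 < (t a).1) ∧
    ∀ x ∈ body K T, ∀ y ∈ body K T, ∀ a b, xRes K x (t a).1 = t a → xRes K y (t b).1 = t b →
      EqOn (h x) (h y) (Iio γ) ∧ (h x γ = h y γ ↔ a = b)

theorem MillerTree.splitsUnder {T : Set (Nd K K)} (hT : MillerTree K T) {p : Nd K K} (hp : p ∈ T) :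
    SplitsUnder id T K p := by
  obtain ⟨-, -, -, hsplit⟩ := hT
  obtain ⟨q, -, hqp, hq⟩ := hsplit p hp
  obtain ⟨s⟩ : Nonempty (K ↪ splitVals K T q) := hq
  choose t htT hqt htq hts using fun a => (s a).2
  refine ⟨q.1, t, fun a => ⟨htT a, NdExt.trans ⟨(hqt a).le, htq a⟩ hqp, hqp.1.trans_lt (hqt a)⟩, ?_⟩
  intro x _ y _ a b hxa hyb
  have hx := xRes_eq_iff.1 hxa
  have hy := xRes_eq_iff.1 hyb
  refine ⟨fun i hi => ?_, ?_⟩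
  · exact ((hx ⟨i, hi.trans (hqt a)⟩).trans (htq a ⟨i, hi⟩)).trans
      ((hy ⟨i, hi.trans (hqt b)⟩).trans (htq b ⟨i, hi⟩)).symm
  · rw [id, id, hx ⟨q.1, hqt a⟩, hy ⟨q.1, hqt b⟩, hts, hts, Subtype.val_inj, s.injective.eq_iff]

variable [WellFoundedLT K]

theorem exists_fusion_sequence {P Z : Type*} [Nonempty P] (r : P → P → Prop) [IsTrans P r]
    (hub : ∀ (b : K) (u : Iio b → P), (∀ c d, c < d → r (u c) (u d)) → ∃ p, ∀ c, r (u c) p)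
    {t : P → Z → P} (ht : ∀ p a, r p (t p a)) :
    ∃ E : (K → Z) → K → P, (∀ f g b, EqOn f g (Iio b) → E f b = E g b) ∧
      ∀ f c b, c < b → r (t (E f c) (f c)) (E f b) := by
  have exists_bound : ∀ (b : K) (u : Iio b → P),
      ∃ p, (∀ c d, c < d → r (u c) (u d)) → ∀ c, r (u c) p := fun b u => by
    by_cases hu : ∀ c d, c < d → r (u c) (u d)
    · exact (hub b u hu).imp fun p hp _ => hp
    · exact ⟨Classical.arbitrary P, fun h => absurd h hu⟩
  choose bound hbound using exists_bound
  let step (f : K → Z) (b : K) (E : ∀ c, c < b → P) : P :=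
    bound b fun c => t (E c c.2) (f c)
  let E (f : K → Z) : K → P := WellFoundedLT.fix (step f)
  have hE : ∀ f b, E f b = bound b fun c => t (E f c) (f c) := fun f b =>
    WellFoundedLT.fix_eq (step f) b
  refine ⟨E, fun f g b hfg => ?_, fun f c b hcb => ?_⟩
  · induction b using WellFoundedLT.induction with
    | ind b ih =>
      rw [hE f, hE g]
      congr! 3 with c
      · exact ih c c.2 (hfg.mono (Iio_subset_Iio c.2.le))
      · exact hfg c.2
  · induction b using WellFoundedLT.induction generalizing c with
    | ind b ih =>
      rw [hE f b]
      refine hbound b (fun c => t (E f c) (f c)) (fun d d' hdd => ?_) ⟨c, hcb⟩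
      exact _root_.trans (ih d' d'.2 d hdd) (ht _ _)

theorem exists_isSplittingMap_of_splitsUnder {W Y : Type u} {Z : Type*} [Nonempty W]
    (hbdd : ∀ (b : K) (u : Iio b → K), BddAbove (range u)) {h : (K → W) → K → Y}
    {T : Set (Nd K W)} (hne : T.Nonempty) (hT : IsSubtree K T) (hsc : Superclosed K T)
    (hsplit : ∀ p ∈ T, SplitsUnder h T Z p) :
    ∃ Φ : (K → Z) → K → Y, IsSplittingMap Φ ∧ ∀ f, ∃ x ∈ body K T, Φ f = h x := by
  choose γ t ht hsep using fun p : T => hsplit p p.2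
  have : Nonempty T := hne.to_subtype
  let r (p q : T) : Prop := NdExt K q.1 p.1
  have : IsTrans T r := ⟨fun _ _ _ hpq hqs => hqs.trans hpq⟩
  have chain_bound : ∀ (b : K) (u : Iio b → T), (∀ c d, c < d → r (u c) (u d)) →
      ∃ p, ∀ c, r (u c) p := fun b u hu => by
    obtain ⟨p, hpT, hp⟩ :=
      hsc.exists_ndExt_of_chain hT hne (fun c => (u c).2) hu (hbdd b _)
    exact ⟨⟨p, hpT⟩, hp⟩
  obtain ⟨E, hEcongr, hE⟩ := exists_fusion_sequence r chain_bound
    (t := fun p a => ⟨t p a, (ht p a).1⟩) fun p a => (ht p a).2.1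
  have node_lt : ∀ f c b, c < b →
      NdExt K (t (E f b) (f b)) (t (E f c) (f c)) ∧ (t (E f c) (f c)).1 < (t (E f b) (f b)).1 :=
    fun f c b hcb => ⟨(ht _ _).2.1.trans (hE f c b hcb), (hE f c b hcb).1.trans_lt (ht _ _).2.2⟩
  have exists_branch : ∀ f, ∃ x ∈ body K T, ∀ b,
      xRes K x (t (E f b) (f b)).1 = t (E f b) (f b) := fun f =>
    exists_mem_body_of_chain hT (fun b => (ht _ _).1) (fun c b hcb => (node_lt f c b hcb).1)
      fun _ => StrictMono.le_apply (f := fun b => (t (E f b) (f b)).1)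
        fun c b hcb => (node_lt f c b hcb).2
  choose X hXT hX using exists_branch
  refine ⟨fun f => h (X f), fun f b => ⟨γ (E f b), fun g hfg => ?_⟩, fun f => ⟨X f, hXT f, rfl⟩⟩
  have hgX := hX g b
  rw [← hEcongr f g b hfg] at hgX
  exact hsep _ _ (hXT f) _ (hXT g) _ _ (hX f b) hgX

theorem MillerTree.exists_isSplittingMap (hbdd : ∀ (b : K) (u : Iio b → K), BddAbove (range u))
    {T : Set (Nd K K)} (hT : MillerTree K T) :
    ∃ Φ : (K → K) → K → K, IsSplittingMap Φ ∧ range Φ ⊆ body K T := by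
  have : Nonempty K := hT.1.nonempty.map Sigma.fst
  obtain ⟨Φ, hΦ, hΦT⟩ := exists_isSplittingMap_of_splitsUnder hbdd hT.1 hT.2.1 hT.2.2.1
    fun p hp => hT.splitsUnder hp
  refine ⟨Φ, hΦ, range_subset_iff.2 fun f => ?_⟩
  obtain ⟨x, hx, hfx⟩ := hΦT f
  exact hfx ▸ hx

end Fusion

section Cardinality

theorem power_lt_of_isStrongLimit {a b c : Cardinal.{u}} (hc : c.IsStrongLimit) (ha : a < c)
    (hb : b < c) : a ^ b < c :=
  calc
    a ^ b ≤ (2 ^ a) ^ b := power_le_power_right (cantor a).le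
    _ = 2 ^ (a * b) := (power_mul ..).symm
    _ < c := hc.isStrongPrelimit (mul_lt_of_lt hc.aleph0_le ha hb)

variable {K : Type u} [LinearOrder K]

theorem exists_gt_of_mk_le_mk (hK : ℵ₀ ≤ #K) (hseg : ∀ b : K, #(Iio b) < #K) {s : Set K}
    (hs : #K ≤ #s) (m : K) : ∃ a ∈ s, m < a := by
  by_contra! hsm
  have hlt : #(Iic m) < #K := by
    rw [← Iio_insert]
    exact mk_insert_le.trans_lt (add_lt_of_lt hK (hseg m) (one_lt_aleph0.trans_le hK))
  exact ((mk_le_mk_of_subset hsm).trans_lt hlt).not_ge hs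

theorem noMaxOrder_of_mk_Iio_lt (hK : ℵ₀ ≤ #K) (hseg : ∀ b : K, #(Iio b) < #K) :
    NoMaxOrder K :=
  ⟨fun m => by simpa using exists_gt_of_mk_le_mk hK hseg mk_univ.ge m⟩

theorem bddAbove_range_of_mk_lt (hK : (#K).IsRegular) (hseg : ∀ b : K, #(Iio b) < #K)
    {ι : Type u} (hι : #ι < #K) (u : ι → K) : BddAbove (range u) := by
  by_contra hu
  have hcover : ⋃ c, Iio (u c) = Set.univ := iUnion_eq_univ_iff.2 fun m => by
    simpa only [exists_range_iff, mem_Iio] using not_bddAbove_iff.1 hu m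
  have hlt := (card_iUnion_lt_iff_forall_of_isRegular hK hι).2 fun c => hseg (u c)
  rw [hcover, mk_univ] at hlt
  exact hlt.false

variable [WellFoundedLT K]

theorem mk_level_lt_of_mk_splitVals_lt {Y : Type u} (hK : (#K).IsInaccessible)
    (hseg : ∀ b : K, #(Iio b) < #K) {T : Set (Nd K Y)} (hT : IsSubtree K T)
    (hsplit : ∀ p ∈ T, #(splitVals K T p) < #K) (b : K) :
    #{t : Iio b → Y | (⟨b, t⟩ : Nd K Y) ∈ T} < #K := by
  induction b using WellFoundedLT.induction with
  | ind b ih =>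
    let V : Set Y := ⋃ c : Iio b, ⋃ s : {s : Iio c.1 → Y | (⟨c, s⟩ : Nd K Y) ∈ T},
      splitVals K T ⟨c, s⟩
    have hV : #V < #K := by
      refine (card_iUnion_lt_iff_forall_of_isRegular hK.isRegular (hseg b)).2 fun c => ?_
      exact (card_iUnion_lt_iff_forall_of_isRegular hK.isRegular (ih c c.2)).2 fun s =>
        hsplit _ s.2
    have hmem : ∀ t : {t : Iio b → Y | (⟨b, t⟩ : Nd K Y) ∈ T}, ∀ c, t.1 c ∈ V := fun t c =>
      mem_iUnion₂.2 ⟨c, ⟨_, hT _ t.2 c c.2.le⟩, _, t.2, c.2, fun _ => rfl, rfl⟩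
    calc
      _ ≤ #(Iio b → V) := mk_le_of_injective (f := fun t c => ⟨t.1 c, hmem t c⟩) fun t t' h =>
        Subtype.ext (funext fun c => Subtype.ext_iff.1 (congrFun h c))
      _ = #V ^ #(Iio b) := by simp
      _ < #K := power_lt_of_isStrongLimit hK.isStrongLimit hV (hseg b)

end Cardinality

section WeaklyCompact

variable {K : Type u} [LinearOrder K]

theorem TreeProp.exists_accumulation (htp : TreeProp K) (hK : (#K).IsRegular)
    (hseg : ∀ b : K, #(Iio b) < #K) {u : K → K → K}
    (hu : ∀ b, #{t : Iio b → K | (⟨b, t⟩ : Nd K K) ∈ treeOf (range u)} < #K) :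
    ∃ x, ∀ b m, ∃ a, m < a ∧ EqOn x (u a) (Iio b) := by
  let T : Set (Nd K K) := {p | ∀ m, ∃ a, m < a ∧ xRes K (u a) p.1 = p}
  have hT : IsSubtree K T := fun p hp c hc m =>
    (hp m).imp fun a ha => ⟨ha.1, xRes_eq_ndRes ha.2 hc⟩
  have level_subset : ∀ b, {t : Iio b → K | (⟨b, t⟩ : Nd K K) ∈ T} ⊆
      {t : Iio b → K | (⟨b, t⟩ : Nd K K) ∈ treeOf (range u)} := fun b t ht =>
    have ⟨a, _, ha⟩ := ht b
    ⟨u a, ⟨a, rfl⟩, b, ha⟩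
  have level_nonempty : ∀ b, ∃ t : Iio b → K, (⟨b, t⟩ : Nd K K) ∈ T := by
    intro b
    let res (a : K) : {t : Iio b → K | (⟨b, t⟩ : Nd K K) ∈ treeOf (range u)} :=
      ⟨fun i => u a i, u a, ⟨a, rfl⟩, b, rfl⟩
    obtain ⟨t, ht⟩ := infinite_pigeonhole res hK.aleph0_le (by rw [hK.cof_ord]; exact hu b)
    refine ⟨t, fun m => ?_⟩
    obtain ⟨a, hat, hma⟩ := exists_gt_of_mk_le_mk hK.aleph0_le hseg ht.ge m
    exact ⟨a, hma, Sigma.ext rfl (heq_of_eq (Subtype.ext_iff.1 hat))⟩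
  obtain ⟨x, hx⟩ := htp T hT
    ⟨level_nonempty, fun b => (mk_le_mk_of_subset (level_subset b)).trans_lt (hu b)⟩
  exact ⟨x, fun b m => (hx b m).imp fun a ha => ⟨ha.1, (xRes_eq_xRes_iff.1 ha.2).symm⟩⟩

theorem not_accumulation_of_isClosedEmbedding [NoMaxOrder K] {Y : Type u}
    {h : (K → K) → K → Y} (hh : IsClosedEmbedding h) (s : K → K) (l : K) (x : K → Y) :
    ¬ ∀ b m, ∃ a, m < a ∧ EqOn x (h (Function.update s l a)) (Iio b) := by
  intro hx
  have : Nonempty K := ⟨l⟩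
  obtain ⟨y, rfl⟩ := isClosed_bTop_iff.1 hh.isClosed_range x fun b =>
    have ⟨a, _, ha⟩ := hx b l
    ⟨_, ⟨_, rfl⟩, ha⟩
  obtain ⟨b, hlb⟩ := exists_gt l
  obtain ⟨c, hc⟩ := exists_eqOn_of_isInducing hh.isInducing y b
  obtain ⟨a, hya, ha⟩ := hx c (y l)
  exact hya.ne ((hc _ ha hlb).trans (Function.update_self ..))

variable [WellFoundedLT K]

theorem WComp.exists_mk_le_mk_splitVals_or_accumulation (hwc : WComp K)
    (hseg : ∀ b : K, #(Iio b) < #K) (u : K → K → K) :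
    (∃ p ∈ treeOf (range u), #K ≤ #(splitVals K (treeOf (range u)) p)) ∨
      ∃ x, ∀ b m, ∃ a, m < a ∧ EqOn x (u a) (Iio b) := by
  by_contra! hu
  obtain ⟨x, hx⟩ := hwc.2.exists_accumulation hwc.1.isRegular hseg
    (mk_level_lt_of_mk_splitVals_lt hwc.1 hseg (isSubtree_treeOf _) hu.1)
  obtain ⟨b, m, hbm⟩ := hu.2 x
  obtain ⟨a, hma, hxa⟩ := hx b m
  exact hbm a hma hxa

theorem WComp.splitsUnder_of_isClosedEmbedding (hwc : WComp K) (hseg : ∀ b : K, #(Iio b) < #K)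
    {h : (K → K) → K → K} (hh : IsClosedEmbedding h) (s : K → K) (l : K) :
    SplitsUnder h univ K (xRes K s l) := by
  have : NoMaxOrder K := noMaxOrder_of_mk_Iio_lt hwc.1.isRegular.aleph0_le hseg
  have : Nonempty K := ⟨l⟩
  obtain ⟨_, ⟨_, ⟨a₀, rfl⟩, γ, rfl⟩, hγ⟩ :=
    (hwc.exists_mk_le_mk_splitVals_or_accumulation hseg
      fun a => h (Function.update s l a)).resolve_right
    fun ⟨x, hx⟩ => not_accumulation_of_isClosedEmbedding hh s l x hx
  obtain ⟨e⟩ : Nonempty (K ↪ splitVals K _ _) := hγ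
  have exists_branch : ∀ k, ∃ y : K → K, EqOn s y (Iio l) ∧
      EqOn (h (Function.update s l a₀)) (h y) (Iio γ) ∧ h y γ = e k := by
    intro k
    obtain ⟨_, ⟨a, rfl⟩, ha⟩ := mem_splitVals_treeOf.1 (e k).2
    exact ⟨_, eqOn_Iio_update s l a, ha⟩
  choose y hsy hy hye using exists_branch
  obtain ⟨γ', hγ'⟩ := exists_gt γ
  obtain ⟨d, hd⟩ := exists_gt l
  choose c hc using fun k => continuous_bTop_iff.1 hh.continuous (y k) γ'
  have h_eqOn : ∀ {k x}, xRes K x (max (c k) d) = xRes K (y k) (max (c k) d) →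
      EqOn (h x) (h (y k)) (Iio γ') := fun hx =>
    (hc _ _ ((xRes_eq_xRes_iff.1 hx).symm.mono (Iio_subset_Iio (le_max_left _ _)))).symm
  refine ⟨γ, fun k => xRes K (y k) (max (c k) d), fun k => ⟨mem_univ _, ?_, ?_⟩, ?_⟩
  · exact ndExt_xRes_iff.2 ⟨hd.le.trans (le_max_right _ _), xRes_eq_xRes_iff.2 (hsy k).symm⟩
  · exact hd.trans_le (le_max_right _ _)
  · intro x _ z _ j k hx hz
    have hγγ : Iio γ ⊆ Iio γ' := Iio_subset_Iio hγ'.le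
    refine ⟨?_, ?_⟩
    · exact ((h_eqOn hx).mono hγγ).trans
        ((hy j).symm.trans ((hy k).trans ((h_eqOn hz).symm.mono hγγ)))
    · rw [h_eqOn hx hγ', h_eqOn hz hγ', hye, hye, Subtype.val_inj, e.injective.eq_iff]

theorem WComp.exists_isSplittingMap_of_isClosedEmbedding (hwc : WComp K)
    (hseg : ∀ b : K, #(Iio b) < #K) {h : (K → K) → K → K} (hh : IsClosedEmbedding h) :
    ∃ Φ : (K → K) → K → K, IsSplittingMap Φ ∧ range Φ ⊆ range h := by
  have : Nonempty K := mk_ne_zero_iff.1 hwc.1.isRegular.pos.ne'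
  obtain ⟨Φ, hΦ, hΦh⟩ := exists_isSplittingMap_of_splitsUnder (h := h) (T := univ) (Z := K)
    (fun b => bddAbove_range_of_mk_lt hwc.1.isRegular hseg (hseg b))
    ⟨xRes K id (Classical.arbitrary K), mem_univ _⟩
    (fun _ _ _ _ => mem_univ _) (fun _ _ _ => mem_univ _) fun p _ => by
      obtain ⟨s, hs⟩ := exists_xRes_eq p
      exact hs ▸ hwc.splitsUnder_of_isClosedEmbedding hseg hh s p.1
  refine ⟨Φ, hΦ, range_subset_iff.2 fun f => ?_⟩
  obtain ⟨x, -, hfx⟩ := hΦh f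
  exact ⟨x, hfx.symm⟩

end WeaklyCompact

/-- For weakly compact `K`, the Hurewicz dichotomy and the Miller-tree Hurewicz
dichotomy coincide. -/
theorem hurewicz_iff_millerHurewicz (K : Type u) [LinearOrder K]
    [WellFoundedLT K] (hseg : ∀ b : K, #(Set.Iio b) < #K)
    (hwc : WComp K) (A : Set (K → K)) :
    HD K A ↔ MillerHD K A := by
  have hK := hwc.1.isRegular
  have : NoMaxOrder K := noMaxOrder_of_mk_Iio_lt hK.aleph0_le hseg
  have : Nonempty K := mk_ne_zero_iff.1 hK.pos.ne'
  refine or_congr Iff.rfl ⟨?_, ?_⟩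
  · rintro ⟨C, hCA, hC, hCK⟩
    obtain ⟨h, hh, rfl⟩ := hCK.exists_isClosedEmbedding hC
    obtain ⟨Φ, hΦ, hΦC⟩ := hwc.exists_isSplittingMap_of_isClosedEmbedding hseg hh
    refine ⟨treeOf (range Φ), hΦ.millerTree_treeOf_range, ?_⟩
    rw [body_treeOf hΦ.isClosed_range]
    exact hΦC.trans hCA
  · rintro ⟨T, hT, hTA⟩
    obtain ⟨Φ, hΦ, hΦT⟩ := hT.exists_isSplittingMap fun b =>
      bddAbove_range_of_mk_lt hK hseg (hseg b)
    exact ⟨range Φ, hΦT.trans hTA, hΦ.isClosed_range, hΦ.homeoToBaire_range⟩
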